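/- Let ρ > 0, c > 0 and let H₁, H₂, λ be real numbers, and set c_A² := (H₁² + H₂²)/ρ. Let B₀ be the symmetric 6×6 real matrix with rows (1/(ρc²), λH₁/c², λH₂/c², 0, 0, 0), (λH₁/c², ρ, 0, −ρλ, 0, 0), (λH₂/c², 0, ρ, 0, −ρλ, 0), (0, −ρλ, 0, 1, 0, 0), (0, 0, −ρλ, 0, 1, 0), (0, 0, 0, 0, 0, 1). Then B₀ is positive definite if and only if ρλ² < 1/(1 + c_A²/c²). -/

import Mathlib

/-- Hyperbolicity of the secondary Friedrichs symmetrization (equations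
(4.17)–(4.18) of the paper): the matrix `B₀ = S(U)A₀(U)` is positive definite
if and only if `ρλ² < 1/(1 + c_A²/c²)`, where `c_A² = |H|²/ρ`. -/
theorem stmt_4 (ρ c H₁ H₂ lam : ℝ) (hρ : 0 < ρ) (hc : 0 < c)
    (cA2 : ℝ) (hcA2 : cA2 = (H₁ ^ 2 + H₂ ^ 2) / ρ)
    (B₀ : Matrix (Fin 6) (Fin 6) ℝ)
    (hB₀ : B₀ =
      !![1 / (ρ * c ^ 2), lam * H₁ / c ^ 2, lam * H₂ / c ^ 2, 0, 0, 0;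
         lam * H₁ / c ^ 2, ρ, 0, -(ρ * lam), 0, 0;
         lam * H₂ / c ^ 2, 0, ρ, 0, -(ρ * lam), 0;
         0, -(ρ * lam), 0, 1, 0, 0;
         0, 0, -(ρ * lam), 0, 1, 0;
         0, 0, 0, 0, 0, 1]) :
    B₀.PosDef ↔ ρ * lam ^ 2 < 1 / (1 + cA2 / c ^ 2) := by
  have hc2 : 0 < c ^ 2 := by positivity
  have hcond : ρ * lam ^ 2 < 1 / (1 + cA2 / c ^ 2) ↔
      0 < (1 - ρ * lam ^ 2) * c ^ 2 - lam ^ 2 * (H₁ ^ 2 + H₂ ^ 2) := by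
    have h1 : 0 < 1 + cA2 / c ^ 2 := by rw [hcA2]; positivity
    have h2 : (1 - ρ * lam ^ 2) * c ^ 2 - lam ^ 2 * (H₁ ^ 2 + H₂ ^ 2)
        = c ^ 2 * (1 - ρ * lam ^ 2 * (1 + cA2 / c ^ 2)) := by
      rw [hcA2]; field_simp; ring
    rw [lt_div_iff₀ h1, h2, mul_pos_iff_of_pos_left hc2, sub_pos]
  rw [hcond]
  have hQ : ∀ x : Fin 6 → ℝ, star x ⬝ᵥ (B₀.mulVec x) =
      x 0 ^ 2 / (ρ * c ^ 2) + 2 * lam * x 0 * (H₁ * x 1 + H₂ * x 2) / c ^ 2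
      + ρ * (1 - ρ * lam ^ 2) * (x 1 ^ 2 + x 2 ^ 2)
      + (x 3 - ρ * lam * x 1) ^ 2 + (x 4 - ρ * lam * x 2) ^ 2 + x 5 ^ 2 := by
    intro x
    rw [hB₀]
    simp [dotProduct, Matrix.mulVec, Fin.sum_univ_succ]
    field_simp
    ring
  have hH : B₀.IsHermitian := by
    rw [hB₀]
    ext i j
    fin_cases i <;> fin_cases j <;> rfl
  rw [Matrix.posDef_iff_dotProduct_mulVec]
  constructor
  · rintro ⟨-, h⟩
    have hk : 0 < ρ * (1 - ρ * lam ^ 2) := by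
      have := @h ![0, 1, 0, ρ * lam, 0, 0] (fun e => by simpa using congrFun e 1)
      rw [hQ] at this
      simpa using this
    have := @h ![c ^ 2 * (ρ * (1 - ρ * lam ^ 2)), -lam * H₁, -lam * H₂,
      ρ * lam * (-lam * H₁), ρ * lam * (-lam * H₂), 0]
      (fun e => (mul_pos hc2 hk).ne' (congrFun e 0))
    rw [hQ] at this
    refine (mul_pos_iff_of_pos_left hk).1 (this.trans_eq ?_)
    simp
    field_simp
    ring
  · intro hD
    refine ⟨hH, fun x hx => ?_⟩
    have hk : 0 < 1 - ρ * lam ^ 2 := by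
      have : 0 ≤ lam ^ 2 * (H₁ ^ 2 + H₂ ^ 2) := by positivity
      exact (mul_pos_iff_of_pos_right hc2).1 (by linarith)
    rw [hQ]
    obtain ⟨k, hkd⟩ : ∃ k, k = 1 - ρ * lam ^ 2 := ⟨_, rfl⟩
    rw [← hkd] at hk hD ⊢
    obtain ⟨D, hDd⟩ : ∃ D, D = k * c ^ 2 - lam ^ 2 * (H₁ ^ 2 + H₂ ^ 2) := ⟨_, rfl⟩
    rw [← hDd] at hD
    have e : x 0 ^ 2 / (ρ * c ^ 2) + 2 * lam * x 0 * (H₁ * x 1 + H₂ * x 2) / c ^ 2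
      + ρ * k * (x 1 ^ 2 + x 2 ^ 2) = D / (ρ * c ^ 4 * k) * x 0 ^ 2
      + ρ * k * (x 1 + lam * x 0 * H₁ / (c ^ 2 * ρ * k)) ^ 2
      + ρ * k * (x 2 + lam * x 0 * H₂ / (c ^ 2 * ρ * k)) ^ 2 := by
      rw [hDd]; field_simp; ring
    rw [e]
    have hA : 0 < D / (ρ * c ^ 4 * k) := by positivity
    have hB : 0 < ρ * k := by positivity
    by_contra hn
    have n0 := mul_nonneg hA.le (sq_nonneg (x 0))
    have n1 := mul_nonneg hB.le (sq_nonneg (x 1 + lam * x 0 * H₁ / (c ^ 2 * ρ * k)))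
    have n2 := mul_nonneg hB.le (sq_nonneg (x 2 + lam * x 0 * H₂ / (c ^ 2 * ρ * k)))
    have n3 := sq_nonneg (x 3 - ρ * lam * x 1)
    have n4 := sq_nonneg (x 4 - ρ * lam * x 2)
    have n5 := sq_nonneg (x 5)
    have z0 : D / (ρ * c ^ 4 * k) * x 0 ^ 2 = 0 := by linarith
    have z1 : ρ * k * (x 1 + lam * x 0 * H₁ / (c ^ 2 * ρ * k)) ^ 2 = 0 := by linarith
    have z2 : ρ * k * (x 2 + lam * x 0 * H₂ / (c ^ 2 * ρ * k)) ^ 2 = 0 := by linarith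
    have z3 : (x 3 - ρ * lam * x 1) ^ 2 = 0 := by linarith
    have z4 : (x 4 - ρ * lam * x 2) ^ 2 = 0 := by linarith
    have z5 : (x 5) ^ 2 = 0 := by linarith
    have y0 : x 0 = 0 := pow_eq_zero_iff two_ne_zero |>.1 ((mul_eq_zero.1 z0).resolve_left hA.ne')
    have y1 := pow_eq_zero_iff two_ne_zero |>.1 ((mul_eq_zero.1 z1).resolve_left hB.ne')
    have y2 := pow_eq_zero_iff two_ne_zero |>.1 ((mul_eq_zero.1 z2).resolve_left hB.ne')
    have y3 := pow_eq_zero_iff two_ne_zero |>.1 z3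
    have y4 := pow_eq_zero_iff two_ne_zero |>.1 z4
    have y5 := pow_eq_zero_iff two_ne_zero |>.1 z5
    simp only [y0, mul_zero, zero_mul, zero_div, add_zero] at y1 y2
    simp only [y1, y2, mul_zero, sub_zero] at y3 y4
    apply hx
    ext i
    fin_cases i <;> assumption
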